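/- arXiv:2004.05929 — 2 statements merged into one kernel-verified Lean document; each statement's English description precedes it below -/
import Mathlib

section
/- Let ε > 0, let γ be a real number, and let ψ be an approximation function with ∑_q ψ(q)/d(q)^{1+ε} = ∞, where d(q) is the number of positive divisors of q. Then the set of x ∈ [0,1] such that ‖qx − γ‖ ≤ ψ(q) for infinitely many positive integers q has Lebesgue measure one. -/
open MeasureTheory Filter Real

/-- Distance from a real number to the nearest integer. -/
noncomputable def dnint (x : ℝ) : ℝ := |x - round x|

open Finset ProbabilityTheory

/-!
On the circle let `A q` be the set of `x` with `‖q x - γ‖ ≤ ψ q`, of measure `2 ψ q` when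
`ψ q ≤ 1 / 2`. The set `A r` is invariant under translation by `1 / r`, and averaging over these
translations shows that the overlap of `A q` and `A r` exceeds the product of their measures by at
most `2 ψ r * gcd(q, r) / r`. Since `gcd(q, r) / r`, summed over `q ≤ r`, is at most `d(r)`,
Chebyshev's inequality shows that if `d(q) ≤ D` on a finite set of `q`'s, their sets `A q` miss at
most a proportion `D / ∑ ψ q` of the circle. If a set of positive measure `κ` avoided every `A q`
with `q > N`, then `∑ ψ q ≤ D / κ` for every finite set of such `q`'s with `d(q) ≤ D`; splitting
dyadically by the size of `d(q)`, this makes `∑ ψ q / d(q) ^ (1 + ε)` converge.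
-/

lemma not_summable_of_tendsto_sum_atTop {ι α : Type*} {l : Filter α} [l.NeBot] {f : ι → ℝ}
    {s : α → Finset ι} (hf : ∀ i, 0 ≤ f i) (hs : Tendsto (fun a ↦ ∑ i ∈ s a, f i) l atTop) :
    ¬ Summable f := fun hsum ↦ by
  obtain ⟨a, ha⟩ := (hs.eventually_gt_atTop (∑' i, f i)).exists
  exact ha.not_ge (hsum.sum_le_tsum (s a) fun i _ ↦ hf i)

lemma summable_mul_of_sum_le_mul {ι : Type*} {f : ι → ℝ} {d : ι → ℕ} {w : ℕ → ℝ} {C : ℝ}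
    (hf : ∀ i, 0 ≤ f i) (hd : ∀ i, d i ≠ 0) (hw : ∀ n, 0 ≤ w n)
    (hw_anti : ∀ ⦃m n⦄, 0 < m → m ≤ n → w n ≤ w m) (hw_sum : Summable w)
    (hC : ∀ (s : Finset ι) (D : ℕ), (∀ i ∈ s, d i ≤ D) → ∑ i ∈ s, f i ≤ C * D) :
    Summable fun i ↦ f i * w (d i) := by
  have hcond : Summable fun k : ℕ ↦ (2 : ℝ) ^ k * w (2 ^ k) :=
    (summable_condensed_iff_of_nonneg hw hw_anti).2 hw_sum
  have hC₀ : 0 ≤ C := by simpa using hC ∅ 1 (by simp)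
  refine summable_of_sum_le (c := ∑' k : ℕ, 2 * C * (2 ^ k * w (2 ^ k)))
    (fun i ↦ mul_nonneg (hf i) (hw _)) fun s ↦ ?_
  have hlayer (k : ℕ) :
      ∑ i ∈ s with Nat.log 2 (d i) = k, f i * w (d i) ≤ 2 * C * (2 ^ k * w (2 ^ k)) := by
    have hle_w : ∀ i ∈ s.filter (fun i ↦ Nat.log 2 (d i) = k), w (d i) ≤ w (2 ^ k) := by
      intro i hi
      refine hw_anti (by positivity) ?_
      simpa only [← (mem_filter.1 hi).2] using Nat.pow_log_le_self 2 (hd i)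
    have hd_le : ∀ i ∈ s.filter (fun i ↦ Nat.log 2 (d i) = k), d i ≤ 2 ^ (k + 1) := by
      intro i hi
      simpa only [← (mem_filter.1 hi).2] using (Nat.lt_pow_succ_log_self one_lt_two (d i)).le
    calc ∑ i ∈ s with Nat.log 2 (d i) = k, f i * w (d i)
        ≤ ∑ i ∈ s with Nat.log 2 (d i) = k, f i * w (2 ^ k) :=
          sum_le_sum fun i hi ↦ mul_le_mul_of_nonneg_left (hle_w i hi) (hf i)
      _ = (∑ i ∈ s with Nat.log 2 (d i) = k, f i) * w (2 ^ k) := (sum_mul ..).symm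
      _ ≤ C * (2 ^ (k + 1) : ℕ) * w (2 ^ k) :=
          mul_le_mul_of_nonneg_right (hC _ _ hd_le) (hw _)
      _ = 2 * C * (2 ^ k * w (2 ^ k)) := by push_cast; ring
  calc ∑ i ∈ s, f i * w (d i)
      = ∑ k ∈ s.image (fun i ↦ Nat.log 2 (d i)), ∑ i ∈ s with Nat.log 2 (d i) = k, f i * w (d i) :=
        (sum_fiberwise_of_maps_to (fun _ ↦ mem_image_of_mem _) _).symm
    _ ≤ ∑ k ∈ s.image (fun i ↦ Nat.log 2 (d i)), 2 * C * (2 ^ k * w (2 ^ k)) :=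
        sum_le_sum fun k _ ↦ hlayer k
    _ ≤ ∑' k : ℕ, 2 * C * (2 ^ k * w (2 ^ k)) :=
        (hcond.mul_left _).sum_le_tsum _ fun k _ ↦ by have := hw (2 ^ k); positivity

lemma sum_sum_le_two_mul_sum_filter_le {ι : Type*} [LinearOrder ι] (s : Finset ι)
    {f g : ι → ι → ℝ} (hf : ∀ i j, f i j = f j i) (hg : ∀ i ∈ s, ∀ j ∈ s, 0 ≤ g i j)
    (hfg : ∀ i ∈ s, ∀ j ∈ s, i ≤ j → f i j ≤ g i j) :
    ∑ i ∈ s, ∑ j ∈ s, f i j ≤ 2 * ∑ j ∈ s, ∑ i ∈ s with i ≤ j, g i j := by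
  set h : ι → ι → ℝ := fun i j ↦ if i ≤ j then g i j else 0
  have hh : ∀ i ∈ s, ∀ j ∈ s, 0 ≤ h i j := fun i hi j hj ↦ ite_nonneg (hg i hi j hj) le_rfl
  have hle : ∀ i ∈ s, ∀ j ∈ s, i ≤ j → f i j ≤ h i j + h j i := fun i hi j hj hij ↦
    calc f i j ≤ h i j := by simpa only [h, if_pos hij] using hfg i hi j hj hij
      _ ≤ h i j + h j i := le_add_of_nonneg_right (hh j hj i hi)
  calc ∑ i ∈ s, ∑ j ∈ s, f i j ≤ ∑ i ∈ s, ∑ j ∈ s, (h i j + h j i) := by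
        refine sum_le_sum fun i hi ↦ sum_le_sum fun j hj ↦ ?_
        rcases le_total i j with hij | hji
        · exact hle i hi j hj hij
        · rw [hf, add_comm]
          exact hle j hj i hi hji
    _ = 2 * ∑ j ∈ s, ∑ i ∈ s, h i j := by
        simp only [sum_add_distrib]
        rw [sum_comm, two_mul]
    _ = 2 * ∑ j ∈ s, ∑ i ∈ s with i ≤ j, g i j := by simp only [h, sum_filter]

lemma sum_gcd_le_mul_card_divisors (r : ℕ) :
    ∑ q ∈ Ioc 0 r, q.gcd r ≤ r * #r.divisors := by
  calc ∑ q ∈ Ioc 0 r, q.gcd r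
      ≤ ∑ q ∈ Ioc 0 r, ∑ e ∈ r.divisors, if e ∣ q then e else 0 := by
        refine sum_le_sum fun q hq ↦ ?_
        have hr : r ≠ 0 := by grind
        have hmem : q.gcd r ∈ r.divisors := Nat.mem_divisors.2 ⟨q.gcd_dvd_right r, hr⟩
        calc q.gcd r = if q.gcd r ∣ q then q.gcd r else 0 := (if_pos (q.gcd_dvd_left r)).symm
          _ ≤ _ := single_le_sum (f := fun e ↦ if e ∣ q then e else 0) (by simp) hmem
    _ = ∑ e ∈ r.divisors, ∑ q ∈ Ioc 0 r, if e ∣ q then e else 0 := sum_comm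
    _ = ∑ _ ∈ r.divisors, r := by
        refine sum_congr rfl fun e he ↦ ?_
        rw [← sum_filter, sum_const, Nat.Ioc_filter_dvd_card_eq_div, smul_eq_mul,
          Nat.div_mul_cancel (Nat.dvd_of_mem_divisors he)]
    _ = r * #r.divisors := by rw [sum_const, smul_eq_mul, mul_comm]

lemma sum_gcd_div_le_card_divisors {r : ℕ} {s : Finset ℕ} (hs : s ⊆ Ioc 0 r) :
    ∑ q ∈ s, (q.gcd r / r : ℝ) ≤ #r.divisors := by
  rw [← sum_div]
  refine div_le_of_le_mul₀ r.cast_nonneg (Nat.cast_nonneg _) ?_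
  rw [mul_comm]
  exact_mod_cast (sum_le_sum_of_subset hs).trans (sum_gcd_le_mul_card_divisors r)

lemma card_Icc_ceil_floor_le {a b : ℝ} (hab : a ≤ b) : (#(Icc ⌈a⌉ ⌊b⌋) : ℝ) ≤ b - a + 1 := by
  have hle : ⌈a⌉ ≤ ⌊b⌋ + 1 := Int.ceil_le.2 (by push_cast; linarith [Int.lt_floor_add_one b])
  have hcard : (#(Icc ⌈a⌉ ⌊b⌋) : ℝ) = ⌊b⌋ + 1 - ⌈a⌉ := by
    exact_mod_cast Int.card_Icc_of_le _ _ hle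
  linarith [Int.floor_le b, Int.le_ceil a]

open scoped Classical in
lemma card_filter_norm_add_mul_div_le {q r : ℕ} (hqr : q.Coprime r) (y : UnitAddCircle) {δ : ℝ}
    (hδ : 0 ≤ δ) :
    #{n ∈ range r | ‖y + ((q * ((n : ℕ) / r) : ℝ) : UnitAddCircle)‖ ≤ δ} ≤ 2 * δ * r + 1 := by
  induction y using QuotientAddGroup.induction_on with | H y =>
  set t : ℕ → ℝ := fun n ↦ y + q * (n / r)
  set k : ℕ → ℤ := fun n ↦ q * n - r * round (t n)
  have hmaps : Set.MapsTo k (range r |>.filter fun n ↦ ‖(t n : UnitAddCircle)‖ ≤ δ)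
      (Icc ⌈(-y + -δ) * r⌉ ⌊(-y + δ) * r⌋) := by
    intro n hn
    obtain ⟨hnr, hδn⟩ : n < r ∧ |t n - round (t n)| ≤ δ := by
      simpa [UnitAddCircle.norm_eq] using hn
    have hr : (0 : ℝ) < r := by exact_mod_cast n.zero_le.trans_lt hnr
    have hk : (k n : ℝ) = (-y + (t n - round (t n))) * r := by
      simp only [k, t]
      push_cast
      field_simp
      ring
    obtain ⟨hlow, hupp⟩ := abs_le.1 hδn
    simp only [coe_Icc, Set.mem_Icc, Int.ceil_le, Int.le_floor, hk]
    exact ⟨by gcongr, by gcongr⟩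
  have hinj : Set.InjOn k (range r |>.filter fun n ↦ ‖(t n : UnitAddCircle)‖ ≤ δ) := by
    intro m hm n hn hmn
    have hdvd : (r : ℤ) ∣ q * (n - m) := ⟨round (t n) - round (t m), by grind⟩
    have hmod : m ≡ n [MOD r] := Nat.modEq_iff_dvd.2 <|
      (Nat.isCoprime_iff_coprime.2 hqr.symm).dvd_of_dvd_mul_left hdvd
    exact hmod.eq_of_lt_of_lt (mem_range.1 (mem_filter.1 hm).1) (mem_range.1 (mem_filter.1 hn).1)
  calc (#{n ∈ range r | ‖(t n : UnitAddCircle)‖ ≤ δ} : ℝ)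
      ≤ #(Icc ⌈(-y + -δ) * r⌉ ⌊(-y + δ) * r⌋) := by
        exact_mod_cast card_le_card_of_injOn k hmaps hinj
    _ ≤ (-y + δ) * r - (-y + -δ) * r + 1 := card_Icc_ceil_floor_le (by gcongr; linarith)
    _ = 2 * δ * r + 1 := by ring

open scoped Classical in
lemma card_mul_measureReal_inter_le {G ι : Type*} [AddGroup G] [MeasurableSpace G]
    [MeasurableAdd G] {μ : Measure G} [μ.IsAddRightInvariant] [IsFiniteMeasure μ] {A T : Set G}
    (hA : MeasurableSet A) {s : Finset ι} {g : ι → G}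
    (hT : ∀ i ∈ s, (· + g i) ⁻¹' T = T) {K : ℝ} (hK : ∀ x, #{i ∈ s | x + g i ∈ A} ≤ K) :
    #s * μ.real (A ∩ T) ≤ K * μ.real T := by
  have hA' (i : ι) : MeasurableSet ((· + g i) ⁻¹' A) := measurable_add_const (g i) hA
  have hint (i : ι) : Integrable (((· + g i) ⁻¹' A).indicator (1 : G → ℝ)) (μ.restrict T) :=
    (integrable_const 1).indicator (hA' i)
  have htranslate : ∀ i ∈ s,
      μ.real (A ∩ T) = ∫ x in T, ((· + g i) ⁻¹' A).indicator (1 : G → ℝ) x ∂μ := by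
    intro i hi
    rw [integral_indicator_one (hA' i), measureReal_restrict_apply (hA' i)]
    nth_rw 2 [← hT i hi]
    rw [← Set.preimage_inter, measureReal_def, measureReal_def, measure_preimage_add_right]
  have hcount (x : G) :
      ∑ i ∈ s, ((· + g i) ⁻¹' A).indicator (1 : G → ℝ) x = #{i ∈ s | x + g i ∈ A} := by
    simp [Set.indicator_apply]
  calc #s * μ.real (A ∩ T)
      = ∑ i ∈ s, ∫ x in T, ((· + g i) ⁻¹' A).indicator (1 : G → ℝ) x ∂μ := by
        rw [← sum_congr rfl htranslate, sum_const, nsmul_eq_mul]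
    _ = ∫ x in T, ∑ i ∈ s, ((· + g i) ⁻¹' A).indicator (1 : G → ℝ) x ∂μ :=
        (integral_finsetSum _ fun i _ ↦ hint i).symm
    _ ≤ ∫ _ in T, K ∂μ :=
        integral_mono (integrable_finsetSum _ fun i _ ↦ hint i) (integrable_const K)
          fun x ↦ (hcount x).trans_le (hK x)
    _ = K * μ.real T := by rw [setIntegral_const, smul_eq_mul, mul_comm]

lemma covariance_indicator_one {Ω : Type*} [MeasurableSpace Ω] {μ : Measure Ω}
    [IsProbabilityMeasure μ] {A B : Set Ω} (hA : MeasurableSet A) (hB : MeasurableSet B) :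
    cov[A.indicator 1, B.indicator 1; μ] = μ.real (A ∩ B) - μ.real A * μ.real B := by
  have hL2 {s : Set Ω} (hs : MeasurableSet s) : MemLp (s.indicator (1 : Ω → ℝ)) 2 μ :=
    (memLp_const 1).indicator hs
  rw [covariance_eq_sub (hL2 hA) (hL2 hB), ← Set.inter_indicator_one,
    integral_indicator_one (hA.inter hB), integral_indicator_one hA, integral_indicator_one hB]

lemma measureReal_compl_biUnion_mul_sq_le {Ω ι : Type*} [MeasurableSpace Ω] {μ : Measure Ω}
    [IsProbabilityMeasure μ] (s : Finset ι) {A : ι → Set Ω} (hA : ∀ i, MeasurableSet (A i)) :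
    μ.real (⋃ i ∈ s, A i)ᶜ * (∑ i ∈ s, μ.real (A i)) ^ 2 ≤
      ∑ i ∈ s, ∑ j ∈ s, (μ.real (A i ∩ A j) - μ.real (A i) * μ.real (A j)) := by
  set X : Ω → ℝ := fun ω ↦ ∑ i ∈ s, (A i).indicator 1 ω
  set m : ℝ := ∑ i ∈ s, μ.real (A i)
  have hL2 (i : ι) : MemLp ((A i).indicator (1 : Ω → ℝ)) 2 μ := (memLp_const 1).indicator (hA i)
  have hmean : μ[X] = m := by
    rw [integral_finsetSum _ fun i _ ↦ (hL2 i).integrable one_le_two]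
    exact sum_congr rfl fun i _ ↦ integral_indicator_one (hA i)
  have hvar : Var[X; μ] =
      ∑ i ∈ s, ∑ j ∈ s, (μ.real (A i ∩ A j) - μ.real (A i) * μ.real (A j)) := by
    rw [variance_fun_sum' fun i _ ↦ hL2 i]
    simp only [covariance_indicator_one (hA _) (hA _)]
  rw [← hvar]
  obtain hm | hm : 0 = m ∨ 0 < m := (sum_nonneg fun i _ ↦ measureReal_nonneg).eq_or_lt
  · simp [← hm, variance_nonneg]
  have hsub : (⋃ i ∈ s, A i)ᶜ ⊆ {ω | m ≤ |X ω - μ[X]|} := by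
    intro ω hω
    have hX : X ω = 0 := sum_eq_zero fun i hi ↦
      Set.indicator_of_notMem (fun h ↦ hω (Set.mem_biUnion hi h)) _
    simp [hX, hmean, le_abs_self]
  rw [← le_div_iff₀ (pow_pos hm 2)]
  calc μ.real (⋃ i ∈ s, A i)ᶜ ≤ μ.real {ω | m ≤ |X ω - μ[X]|} := measureReal_mono hsub
    _ ≤ Var[X; μ] / m ^ 2 :=
      ENNReal.toReal_le_of_le_ofReal (div_nonneg (variance_nonneg _ _) (sq_nonneg _))
        (meas_ge_le_variance_div_sq (memLp_finsetSum _ fun i _ ↦ hL2 i) hm)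

lemma measurePreserving_nsmul {T : ℝ} [Fact (0 < T)] {q : ℕ} (hq : q ≠ 0) :
    MeasurePreserving (fun x : AddCircle T ↦ q • x) := by
  simpa only [natCast_zsmul] using
    Measure.measurePreserving_zsmul (volume : Measure (AddCircle T)) (Nat.cast_ne_zero.2 hq)

/-- The set of `x` on the circle `ℝ / ℤ` with `‖q x - c‖ ≤ δ`. -/
def approxSet (q : ℕ) (c : UnitAddCircle) (δ : ℝ) : Set UnitAddCircle :=
  {x | ‖q • x - c‖ ≤ δ}

namespace approxSet

variable {q r : ℕ} {c c' : UnitAddCircle} {δ δ' : ℝ}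

lemma eq_preimage_closedBall :
    approxSet q c δ = (fun x : UnitAddCircle ↦ q • x) ⁻¹' Metric.closedBall c δ := by
  ext x
  simp only [approxSet, Set.mem_ofPred_eq, Set.mem_preimage, Metric.mem_closedBall, dist_eq_norm]

protected theorem measurableSet : MeasurableSet (approxSet q c δ) :=
  (isClosed_le (by fun_prop) continuous_const).measurableSet

lemma measureReal_eq (hq : q ≠ 0) (hδ₀ : 0 ≤ δ) (hδ : δ ≤ 1 / 2) :
    volume.real (approxSet q c δ) = 2 * δ := by
  rw [eq_preimage_closedBall, (measurePreserving_nsmul hq).measureReal_preimage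
    Metric.isClosed_closedBall.nullMeasurableSet, measureReal_def, AddCircle.volume_closedBall,
    min_eq_right (by linarith), ENNReal.toReal_ofReal (by linarith)]

lemma measureReal_inter_le_of_coprime (hqr : q.Coprime r) (hr : r ≠ 0) (hδ : 0 ≤ δ) :
    volume.real (approxSet q c δ ∩ approxSet r c' δ') ≤
      (2 * δ + 1 / r) * volume.real (approxSet r c' δ') := by
  have hr₀ : (0 : ℝ) < r := by positivity
  set g : ℕ → UnitAddCircle := fun n ↦ ((n / r : ℝ) : UnitAddCircle)
  have hg (k n : ℕ) : k • g n = ((k * (n / r) : ℝ) : UnitAddCircle) := by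
    rw [← AddCircle.coe_nsmul, nsmul_eq_mul]
  have hgr (n : ℕ) : r • g n = 0 := by
    rw [hg, mul_div_cancel₀ _ hr₀.ne', AddCircle.coe_eq_zero_iff]
    exact ⟨n, by simp⟩
  have hinv (n : ℕ) : (· + g n) ⁻¹' approxSet r c' δ' = approxSet r c' δ' := by
    ext x
    simp only [approxSet, Set.mem_preimage, Set.mem_ofPred_eq, smul_add, hgr, add_zero]
  have havg := card_mul_measureReal_inter_le (μ := volume) (s := range r) (g := g)
    (approxSet.measurableSet (q := q) (c := c) (δ := δ)) (fun n _ ↦ hinv n)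
    (K := 2 * δ * r + 1) fun x ↦ by
      simpa only [approxSet, Set.mem_ofPred_eq, smul_add, hg, add_sub_right_comm]
        using card_filter_norm_add_mul_div_le hqr (q • x - c) hδ
  rw [card_range] at havg
  refine le_of_mul_le_mul_left (havg.trans_eq ?_) hr₀
  field_simp

lemma mul_eq_preimage (g : ℕ) :
    approxSet (g * q) c δ = (fun x : UnitAddCircle ↦ g • x) ⁻¹' approxSet q c δ := by
  ext x
  simp only [approxSet, Set.mem_ofPred_eq, Set.mem_preimage, mul_nsmul]

-- Multiplication by `gcd(q, r)` preserves the measure, which reduces this to coprime `q`, `r`.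
lemma measureReal_inter_le (hr : r ≠ 0) (hδ : 0 ≤ δ) :
    volume.real (approxSet q c δ ∩ approxSet r c' δ') ≤
      (2 * δ + q.gcd r / r) * volume.real (approxSet r c' δ') := by
  obtain ⟨q', r', hcop, hq', hr'⟩ := Nat.exists_coprime q r
  set g := q.gcd r
  have hg : g ≠ 0 := Nat.gcd_ne_zero_right hr
  have hr'₀ : r' ≠ 0 := by rintro rfl; simp_all
  have hdiv : (g / r : ℝ) = 1 / r' := by
    rw [hr']
    push_cast
    field_simp
  have hpre := measurePreserving_nsmul (T := 1) hg
  rw [hdiv, hq', hr', mul_comm q', mul_comm r', mul_eq_preimage, mul_eq_preimage,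
    ← Set.preimage_inter, hpre.measureReal_preimage
      (approxSet.measurableSet.inter approxSet.measurableSet).nullMeasurableSet,
    hpre.measureReal_preimage approxSet.measurableSet.nullMeasurableSet]
  exact measureReal_inter_le_of_coprime hcop hr'₀ hδ

lemma measureReal_inter_sub_mul_le (hq : q ≠ 0) (hr : r ≠ 0) (hδ₀ : 0 ≤ δ) (hδ : δ ≤ 1 / 2)
    (hδ'₀ : 0 ≤ δ') (hδ' : δ' ≤ 1 / 2) :
    volume.real (approxSet q c δ ∩ approxSet r c' δ') -
      volume.real (approxSet q c δ) * volume.real (approxSet r c' δ') ≤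
      2 * δ' * (q.gcd r / r) := by
  have h := measureReal_inter_le (q := q) (c := c) (c' := c') (δ' := δ') hr hδ₀
  rw [measureReal_eq hr hδ'₀ hδ'] at h ⊢
  rw [measureReal_eq hq hδ₀ hδ]
  linarith

end approxSet

section Circle

variable {ψ : ℕ → ℝ} (c : ℕ → UnitAddCircle)

lemma measureReal_compl_biUnion_approxSet_mul_sum_le {s : Finset ℕ} {D : ℕ}
    (hs : ∀ q ∈ s, q ≠ 0) (hψ₀ : ∀ q ∈ s, 0 ≤ ψ q) (hψ : ∀ q ∈ s, ψ q ≤ 1 / 2)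
    (hD : ∀ q ∈ s, #q.divisors ≤ D) :
    volume.real (⋃ q ∈ s, approxSet q (c q) (ψ q))ᶜ * ∑ q ∈ s, ψ q ≤ D := by
  set A : ℕ → Set UnitAddCircle := fun q ↦ approxSet q (c q) (ψ q)
  set S : ℝ := ∑ q ∈ s, ψ q
  have hmass : ∑ q ∈ s, volume.real (A q) = 2 * S := by
    rw [mul_sum]
    exact sum_congr rfl fun q hq ↦
      approxSet.measureReal_eq (hs q hq) (hψ₀ q hq) (hψ q hq)
  have hrow : ∀ r ∈ s, ∑ q ∈ s with q ≤ r, 2 * ψ r * (q.gcd r / r : ℝ) ≤ 2 * ψ r * D := by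
    intro r hr
    have hsub : s.filter (· ≤ r) ⊆ Ioc 0 r := fun q hq ↦
      mem_Ioc.2 ⟨Nat.pos_of_ne_zero (hs q (mem_filter.1 hq).1), (mem_filter.1 hq).2⟩
    have hψr := hψ₀ r hr
    rw [← mul_sum]
    gcongr
    exact (sum_gcd_div_le_card_divisors hsub).trans (by exact_mod_cast hD r hr)
  have hcov : ∑ q ∈ s, ∑ r ∈ s,
      (volume.real (A q ∩ A r) - volume.real (A q) * volume.real (A r)) ≤ 4 * S * D :=
    calc _ ≤ 2 * ∑ r ∈ s, ∑ q ∈ s with q ≤ r, 2 * ψ r * (q.gcd r / r : ℝ) := by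
          refine sum_sum_le_two_mul_sum_filter_le s ?_ ?_ ?_
          · exact fun q r ↦ by rw [Set.inter_comm, mul_comm]
          · exact fun q _ r hr ↦ by have := hψ₀ r hr; positivity
          · exact fun q hq r hr _ ↦ approxSet.measureReal_inter_sub_mul_le (hs q hq) (hs r hr)
              (hψ₀ q hq) (hψ q hq) (hψ₀ r hr) (hψ r hr)
      _ ≤ 2 * ∑ r ∈ s, 2 * ψ r * D := by gcongr with r hr; exact hrow r hr
      _ = 4 * S * D := by rw [← sum_mul, ← mul_sum]; ring
  have : IsProbabilityMeasure (volume : Measure UnitAddCircle) := ⟨UnitAddCircle.measure_univ⟩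
  have hsecond := (measureReal_compl_biUnion_mul_sq_le (μ := volume) s
    fun q ↦ approxSet.measurableSet).trans hcov
  rw [hmass] at hsecond
  obtain hS | hS : 0 = S ∨ 0 < S := (sum_nonneg hψ₀).eq_or_lt
  · simp [← hS]
  · refine le_of_mul_le_mul_left ?_ (show 0 < 4 * S by positivity)
    linarith

variable {w : ℕ → ℝ}

theorem ae_exists_mem_approxSet {S : Set ℕ} (hS : ∀ q ∈ S, q ≠ 0)
    (hψ₀ : ∀ q ∈ S, 0 ≤ ψ q) (hψ : ∀ q ∈ S, ψ q ≤ 1 / 2) (hw : ∀ n, 0 ≤ w n)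
    (hw_anti : ∀ ⦃m n⦄, 0 < m → m ≤ n → w n ≤ w m) (hw_sum : Summable w)
    (hdiv : ¬ Summable fun q : S ↦ ψ q * w #(q : ℕ).divisors) :
    ∀ᵐ x : UnitAddCircle, ∃ q ∈ S, x ∈ approxSet q (c q) (ψ q) := by
  set E : Set UnitAddCircle := {x | ¬ ∃ q ∈ S, x ∈ approxSet q (c q) (ψ q)}
  by_contra hE
  have hE₀ : 0 < volume.real E := ENNReal.toReal_pos hE (measure_ne_top _ _)
  refine hdiv <| summable_mul_of_sum_le_mul (C := (volume.real E)⁻¹) (fun q ↦ hψ₀ q q.2)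
    (fun q ↦ card_ne_zero.2 <| Nat.nonempty_divisors.2 (hS q q.2)) hw hw_anti hw_sum
    fun s D hD ↦ ?_
  set t : Finset ℕ := s.map (Function.Embedding.subtype _)
  have ht {p : ℕ → Prop} (hp : ∀ q ∈ S, p q) : ∀ q ∈ t, p q := by simp_all [t]
  have hsub : E ⊆ (⋃ q ∈ t, approxSet q (c q) (ψ q))ᶜ := by
    intro x hx hxt
    obtain ⟨q, hq, hxq⟩ := Set.mem_iUnion₂.1 hxt
    exact hx ⟨q, ht (fun _ ↦ id) q hq, hxq⟩
  rw [le_inv_mul_iff₀ hE₀]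
  calc volume.real E * ∑ q ∈ s, ψ q = volume.real E * ∑ q ∈ t, ψ q := by
        simp only [t, sum_map, Function.Embedding.subtype_apply]
    _ ≤ volume.real (⋃ q ∈ t, approxSet q (c q) (ψ q))ᶜ * ∑ q ∈ t, ψ q :=
        mul_le_mul_of_nonneg_right (measureReal_mono hsub) (sum_nonneg (ht hψ₀))
    _ ≤ D := measureReal_compl_biUnion_approxSet_mul_sum_le c (ht hS) (ht hψ₀) (ht hψ)
        (by simpa [t] using hD)

theorem ae_frequently_mem_approxSet (hψ₀ : ∀ q, 0 ≤ ψ q) (hw : ∀ n, 0 ≤ w n)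
    (hw_anti : ∀ ⦃m n⦄, 0 < m → m ≤ n → w n ≤ w m) (hw_sum : Summable w)
    (hdiv : ¬ Summable fun q : ℕ ↦ ψ q * w #q.divisors) :
    ∀ᵐ x : UnitAddCircle, ∃ᶠ q in atTop, x ∈ approxSet q (c q) (ψ q) := by
  by_cases hlarge : ∃ᶠ q in atTop, 1 / 2 ≤ ψ q
  · refine .of_forall fun x ↦ hlarge.mono fun q hq ↦ ?_
    calc ‖q • x - c q‖ ≤ |1| / 2 := AddCircle.norm_le_half_period 1 one_ne_zero
      _ ≤ ψ q := by rwa [abs_one]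
  obtain ⟨N₀, hN₀⟩ := eventually_atTop.1 (not_frequently.1 hlarge)
  simp only [frequently_atTop, ae_all_iff]
  intro N
  have htail : ¬ Summable fun q : ((Set.Iic (max N N₀))ᶜ : Set ℕ) ↦ ψ q * w #(q : ℕ).divisors :=
    fun h ↦ hdiv ((Set.finite_Iic _).summable_compl_iff.1 h)
  have hmem : ∀ q ∈ (Set.Iic (max N N₀))ᶜ, N < q ∧ N₀ < q := by simp
  filter_upwards [ae_exists_mem_approxSet c (fun q hq ↦ (hmem q hq).1.ne_bot) (fun q _ ↦ hψ₀ q)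
    (fun q hq ↦ (not_le.1 (hN₀ q (hmem q hq).2.le)).le) hw hw_anti hw_sum htail] with x ⟨q, hq, hx⟩
  exact ⟨q, (hmem q hq).1.le, hx⟩

end Circle

lemma coe_mem_approxSet_iff {q : ℕ} {x γ δ : ℝ} :
    (x : UnitAddCircle) ∈ approxSet q γ δ ↔ dnint (q * x - γ) ≤ δ := by
  rw [dnint, ← UnitAddCircle.norm_eq, AddCircle.coe_sub, ← nsmul_eq_mul, AddCircle.coe_nsmul]
  rfl

lemma volume_sep_Icc_eq_one {p : UnitAddCircle → Prop} (hp : ∀ᵐ x, p x) :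
    volume {x ∈ Set.Icc (0 : ℝ) 1 | p x} = 1 := by
  have hIoc : ∀ᵐ x : ℝ, x ∈ Set.Ioc (0 : ℝ) 1 → p x := by
    have := (UnitAddCircle.measurePreserving_mk 0).quasiMeasurePreserving.ae hp
    rwa [zero_add, ae_restrict_iff' measurableSet_Ioc] at this
  have hae : {x ∈ Set.Icc (0 : ℝ) 1 | p x} =ᵐ[volume] Set.Icc (0 : ℝ) 1 := by
    filter_upwards [hIoc, Ioc_ae_eq_Icc (a := (0 : ℝ)) (b := 1)] with x hx hmem
    exact propext ⟨And.left, fun hIcc ↦ ⟨hIcc, hx (hmem.mpr hIcc)⟩⟩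
  rw [measure_congr hae, Real.volume_Icc, sub_zero, ENNReal.ofReal_one]

theorem stmt6_general {ψ : ℕ → ℝ} (hψ₀ : ∀ q, 0 ≤ ψ q) (γ : ℕ → ℝ) {w : ℕ → ℝ}
    (hw : ∀ n, 0 ≤ w n) (hw_anti : ∀ ⦃m n⦄, 0 < m → m ≤ n → w n ≤ w m) (hw_sum : Summable w)
    (hdiv : ¬ Summable fun q : ℕ ↦ ψ q * w #q.divisors) :
    volume {x ∈ Set.Icc (0 : ℝ) 1 | {q : ℕ | 0 < q ∧ dnint (q * x - γ q) ≤ ψ q}.Infinite} = 1 := by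
  have hinf : ∀ᵐ x : UnitAddCircle, {q : ℕ | 0 < q ∧ x ∈ approxSet q (γ q) (ψ q)}.Infinite := by
    filter_upwards [ae_frequently_mem_approxSet (fun q ↦ γ q) hψ₀ hw hw_anti hw_sum hdiv] with x hx
    exact Nat.frequently_atTop_iff_infinite.1 ((eventually_gt_atTop 0).and_frequently hx)
  simpa only [coe_mem_approxSet_iff] using volume_sep_Icc_eq_one hinf

theorem stmt6 (ε : ℝ) (hε : 0 < ε) (γ : ℝ) (ψ : ℕ → ℝ) (hψ0 : ∀ q, 0 ≤ ψ q)
    (hdiv : Tendsto (fun Q : ℕ =>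
      ∑ q ∈ Finset.Icc 1 Q, ψ q / ((q.divisors.card : ℝ) ^ ((1:ℝ) + ε))) atTop atTop) :
    volume {x ∈ Set.Icc (0:ℝ) 1 |
      {q : ℕ | 0 < q ∧ dnint (q * x - γ) ≤ ψ q}.Infinite} = 1 :=
  stmt6_general hψ0 (fun _ ↦ γ) (w := fun n ↦ ((n : ℝ) ^ (1 + ε))⁻¹) (fun n ↦ by positivity)
    (fun m n hm hmn ↦ by gcongr) (Real.summable_nat_rpow_inv.2 (by linarith))
    (not_summable_of_tendsto_sum_atTop (fun q ↦ mul_nonneg (hψ0 q) (by positivity)) hdiv)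
end

section
/- There is an absolute constant C₀ > 1 with the following property. For every integer H > 2, every approximation function ψ with 0 < ψ(q) < 1/2 for all q, every irrational number γ, and all integers 1 ≤ q′ < q with Δ(q,q′) ≥ H·gcd(q,q′), one has |A_q ∩ A_{q′}| ≤ 4ψ(q)ψ(q′)·(1 + C₀/(2H)). -/
/-!
On the circle `ℝ / ℤ` the sets `A_q` and `A_q'` are the preimages of balls under multiplication by
`q` and `q'`, so `|A_q'| ≤ 2ψ(q')`. Translation by `1 / q'` leaves `A_q'` invariant, while the
translates of `qx` that it produces run through a coset of the cyclic group of order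
`n = q' / gcd(q, q')`. These points are `1/n`-separated, so at most `n (2ψ(q) + 1/n)` of them lie in
a ball of radius `ψ(q)`. Averaging over the translations gives
`|A_q ∩ A_q'| ≤ (2ψ(q) + gcd(q, q') / q') · 2ψ(q')`, and the same with `q` and `q'` exchanged. If
`q ψ(q') ≤ q' ψ(q)`, the hypothesis on `Δ` bounds the error term `gcd(q, q') / q'` by `2ψ(q) / H`;
otherwise it does so for the exchanged inequality, so `C₀ = 2` works.
-/

open MeasureTheory Filter Real

/-- `A_q = {x ∈ [0,1] : ‖qx - γ‖ < ψ(q)}`. -/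
noncomputable def Aset (ψ : ℕ → ℝ) (γ : ℝ) (q : ℕ) : Set ℝ :=
  {x ∈ Set.Icc (0:ℝ) 1 | dnint (q * x - γ) < ψ q}

/-- `Δ(q,q') = qψ(q') + q'ψ(q)`. -/
noncomputable def Δfun (ψ : ℕ → ℝ) (q q' : ℕ) : ℝ := q * ψ q' + q' * ψ q

open Metric
open scoped ENNReal Finset

theorem card_mul_measure_inter_le {α ι : Type*} [MeasurableSpace α] {μ : Measure α}
    {I : Finset ι} {f : ι → α → α} (hf : ∀ i ∈ I, MeasurePreserving (f i) μ μ) {s t : Set α}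
    [DecidablePred (· ∈ s)] (hs : MeasurableSet s) (ht : MeasurableSet t)
    (hft : ∀ i ∈ I, f i ⁻¹' t = t) {c : ℝ≥0∞} (hc : ∀ x ∈ t, (#{i ∈ I | f i x ∈ s} : ℝ≥0∞) ≤ c) :
    #I * μ (s ∩ t) ≤ c * μ t := by
  have measure_inter_eq : ∀ i ∈ I, μ (s ∩ t) = ∫⁻ x in t, s.indicator 1 (f i x) ∂μ := by
    intro i hi
    have hfi : MeasurePreserving (f i) (μ.restrict t) (μ.restrict t) := by
      simpa only [hft i hi] using (hf i hi).restrict_preimage ht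
    rw [hfi.lintegral_comp (measurable_one.indicator hs), lintegral_indicator_one hs,
      Measure.restrict_apply hs]
  have sum_indicator_eq : ∀ x, ∑ i ∈ I, s.indicator (1 : α → ℝ≥0∞) (f i x) =
      #{i ∈ I | f i x ∈ s} := by
    intro x
    simp only [Set.indicator_apply, Pi.one_apply, Finset.natCast_card_filter]
  calc #I * μ (s ∩ t)
      = ∑ i ∈ I, ∫⁻ x in t, s.indicator 1 (f i x) ∂μ := by
        rw [← nsmul_eq_mul, ← Finset.sum_const, Finset.sum_congr rfl measure_inter_eq]
    _ = ∫⁻ x in t, ∑ i ∈ I, s.indicator 1 (f i x) ∂μ :=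
        (lintegral_finsetSum I fun i hi ↦
          (measurable_one.indicator hs).comp (hf i hi).measurable).symm
    _ ≤ ∫⁻ _ in t, c ∂μ :=
        setLIntegral_mono' ht fun x hx ↦ (sum_indicator_eq x).trans_le (hc x hx)
    _ = c * μ t := setLIntegral_const t c

section AddCircle

variable {T : ℝ} [hT : Fact (0 < T)]

theorem addCircle_volume_ball (x : AddCircle T) (ε : ℝ) :
    volume (ball x ε) = ENNReal.ofReal (min T (2 * ε)) := by
  rw [← measure_congr AddCircle.closedBall_ae_eq_ball, AddCircle.volume_closedBall]

theorem card_mul_le_of_pairwise_le_dist {ι : Type*} {I : Finset ι} {f : ι → AddCircle T}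
    {c : AddCircle T} {r ε : ℝ} (hr : r ≤ T)
    (hsep : (I : Set ι).Pairwise fun i j ↦ r ≤ dist (f i) (f j)) (hI : ∀ i ∈ I, f i ∈ ball c ε) :
    #I * ENNReal.ofReal r ≤ ENNReal.ofReal (2 * ε + r) := by
  have hdisj : (I : Set ι).PairwiseDisjoint fun i ↦ ball (f i) (r / 2) := fun i hi j hj hij ↦
    ball_disjoint_ball <| by linarith [hsep hi hj hij]
  have hsub : ⋃ i ∈ I, ball (f i) (r / 2) ⊆ ball c (ε + r / 2) :=
    Set.iUnion₂_subset fun i hi ↦ ball_subset_ball' <| by linarith [mem_ball.1 (hI i hi)]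
  calc #I * ENNReal.ofReal r
      = ∑ i ∈ I, volume (ball (f i) (r / 2)) := by
        simp only [addCircle_volume_ball, mul_div_cancel₀ r two_ne_zero, min_eq_right hr,
          Finset.sum_const, nsmul_eq_mul]
    _ = volume (⋃ i ∈ I, ball (f i) (r / 2)) :=
        (measure_biUnion_finset hdisj fun _ _ ↦ measurableSet_ball).symm
    _ ≤ volume (ball c (ε + r / 2)) := measure_mono hsub
    _ ≤ ENNReal.ofReal (2 * ε + r) := by
        rw [addCircle_volume_ball]
        exact ENNReal.ofReal_le_ofReal <| (min_le_right _ _).trans_eq (by ring)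

theorem div_addOrderOf_le_dist_add_nsmul {u : AddCircle T} (hu : IsOfFinAddOrder u)
    (x : AddCircle T) :
    (Set.Iio (addOrderOf u)).Pairwise fun i j ↦
      T / addOrderOf u ≤ dist (x + i • u) (x + j • u) := by
  intro i hi j hj hij
  set v := i • u - j • u with hv
  have hv_ne : v ≠ 0 := sub_ne_zero.2 fun h ↦ hij (nsmul_injOn_Iio_addOrderOf hi hj h)
  have hv_fin : IsOfFinAddOrder v := by
    rw [hv, sub_eq_add_neg]
    exact hu.nsmul.add (isOfFinAddOrder_neg_iff.2 hu.nsmul)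
  have hdvd : addOrderOf v ∣ addOrderOf u := by
    rw [addOrderOf_dvd_iff_nsmul_eq_zero, hv, nsmul_sub, nsmul_left_comm, addOrderOf_nsmul_eq_zero,
      nsmul_left_comm, addOrderOf_nsmul_eq_zero, nsmul_zero, nsmul_zero, sub_zero]
  have hpos : 0 < addOrderOf u := hu.addOrderOf_pos
  rw [dist_add_left, dist_eq_norm, div_le_iff₀' (by exact_mod_cast hpos)]
  calc T ≤ addOrderOf v • ‖v‖ := AddCircle.le_add_order_smul_norm_of_isOfFinAddOrder hv_fin hv_ne
    _ ≤ addOrderOf u * ‖v‖ := by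
      rw [nsmul_eq_mul]
      gcongr
      exact Nat.le_of_dvd hpos hdvd

theorem card_filter_add_nsmul_mem_ball_le {u : AddCircle T} (hu : IsOfFinAddOrder u)
    (x c : AddCircle T) (ε : ℝ) [DecidablePred (· ∈ ball c ε)] :
    (#{j ∈ Finset.range (addOrderOf u) | x + j • u ∈ ball c ε} : ℝ≥0∞) ≤
      addOrderOf u * ENNReal.ofReal (2 * ε / T + 1 / addOrderOf u) := by
  have hT₀ : 0 < T := hT.out
  have hn : (0 : ℝ) < addOrderOf u := by exact_mod_cast hu.addOrderOf_pos
  have hpack := card_mul_le_of_pairwise_le_dist (f := fun j : ℕ ↦ x + j • u) (c := c) (ε := ε)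
    (I := {j ∈ Finset.range (addOrderOf u) | x + j • u ∈ ball c ε})
    (div_le_self hT₀.le (by exact_mod_cast hu.addOrderOf_pos))
    ((div_addOrderOf_le_dist_add_nsmul hu x).mono fun j hj ↦
      Finset.mem_range.1 (Finset.mem_filter.1 hj).1)
    fun j hj ↦ (Finset.mem_filter.1 hj).2
  have hr : 0 < T / addOrderOf u := by positivity
  rw [← ENNReal.mul_le_mul_iff_left (ENNReal.ofReal_pos.2 hr).ne' ENNReal.ofReal_ne_top]
  refine hpack.trans_eq ?_
  rw [← ENNReal.ofReal_natCast, ← ENNReal.ofReal_mul hn.le, ← ENNReal.ofReal_mul' hr.le]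
  congr 1
  field_simp

theorem measurePreserving_nsmul_addCircle {q : ℕ} (hq : q ≠ 0) :
    MeasurePreserving (fun x : AddCircle T ↦ q • x) := by
  simpa only [natCast_zsmul] using
    Measure.measurePreserving_zsmul (volume : Measure (AddCircle T)) (Int.natCast_ne_zero.2 hq)

theorem one_div_addOrderOf_nsmul {G : Type*} [AddMonoid G] {t : G} (ht : IsOfFinAddOrder t)
    (q : ℕ) : (1 : ℝ) / addOrderOf (q • t) = (addOrderOf t).gcd q / addOrderOf t := by
  have hgcd : (addOrderOf t).gcd q ≠ 0 := (Nat.gcd_pos_of_pos_left q ht.addOrderOf_pos).ne'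
  rw [ht.addOrderOf_nsmul, Nat.cast_div (Nat.gcd_dvd_left _ q) (by exact_mod_cast hgcd),
    one_div_div]

theorem volume_nsmul_preimage_ball_inter_le (q : ℕ) {q' : ℕ} (hq' : 0 < q') (c c' : AddCircle T)
    (ε ε' : ℝ) :
    volume ((q • ·) ⁻¹' ball c ε ∩ (q' • ·) ⁻¹' ball c' ε') ≤
      ENNReal.ofReal (2 * ε / T + q.gcd q' / q') * ENNReal.ofReal (2 * ε') := by
  classical
  let t : AddCircle T := ((T / q' : ℝ) : AddCircle T)
  have ht_order : addOrderOf t = q' := AddCircle.addOrderOf_period_div hq'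
  have ht_fin : IsOfFinAddOrder t := addOrderOf_pos_iff.1 (ht_order ▸ hq')
  let n := addOrderOf (q • t)
  have hn_pos : 0 < n := ht_fin.nsmul.addOrderOf_pos
  have h_inv : (1 : ℝ) / n = q.gcd q' / q' := by
    rw [one_div_addOrderOf_nsmul ht_fin, ht_order, Nat.gcd_comm]
  have hq'_meas := measurePreserving_nsmul_addCircle (T := T) hq'.ne'
  have translate_invariant : ∀ j ∈ Finset.range n,
      (· + j • t) ⁻¹' ((q' • ·) ⁻¹' ball c' ε') = (q' • ·) ⁻¹' ball c' ε' := by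
    intro j _
    have hqt : q' • t = 0 := ht_order ▸ addOrderOf_nsmul_eq_zero t
    ext x
    simp only [Set.mem_preimage, nsmul_add, nsmul_left_comm t j q', hqt, nsmul_zero, add_zero]
  have count_le : ∀ x ∈ (q' • ·) ⁻¹' ball c' ε',
      (#{j ∈ Finset.range n | x + j • t ∈ (q • ·) ⁻¹' ball c ε} : ℝ≥0∞) ≤
        n * ENNReal.ofReal (2 * ε / T + 1 / n) := by
    intro x _
    have hadd : ∀ j : ℕ, q • (x + j • t) = q • x + j • q • t := fun j ↦ by
      rw [nsmul_add, nsmul_left_comm]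
    simp only [Set.mem_preimage, hadd]
    exact card_filter_add_nsmul_mem_ball_le ht_fin.nsmul (q • x) c ε
  have averaged := card_mul_measure_inter_le
    (fun j _ ↦ measurePreserving_add_right (volume : Measure (AddCircle T)) (j • t))
    (measurableSet_ball.preimage (by fun_prop))
    (hq'_meas.measurable measurableSet_ball) translate_invariant count_le
  rw [Finset.card_range, mul_assoc, ENNReal.mul_le_mul_iff_right (by exact_mod_cast hn_pos.ne')
    (ENNReal.natCast_ne_top n), h_inv] at averaged
  refine averaged.trans ?_
  rw [hq'_meas.measure_preimage measurableSet_ball.nullMeasurableSet, addCircle_volume_ball]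
  gcongr
  exact min_le_right _ _

end AddCircle

theorem dnint_eq_norm_coe (x : ℝ) : dnint x = ‖(x : UnitAddCircle)‖ :=
  UnitAddCircle.norm_eq.symm

theorem Aset_eq_Icc_inter_preimage (ψ : ℕ → ℝ) (γ : ℝ) (q : ℕ) :
    Aset ψ γ q = Set.Icc 0 1 ∩
      ((↑) : ℝ → UnitAddCircle) ⁻¹' ((q • ·) ⁻¹' ball (γ : UnitAddCircle) (ψ q)) := by
  ext x
  simp only [Aset, dnint_eq_norm_coe, Set.mem_inter_iff, Set.mem_preimage, mem_ball, dist_eq_norm,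
    Set.mem_ofPred_eq, AddCircle.coe_sub, ← AddCircle.coe_nsmul, nsmul_eq_mul]

theorem volume_Icc_inter_coe_preimage {s : Set UnitAddCircle} (hs : MeasurableSet s) :
    volume (Set.Icc (0 : ℝ) 1 ∩ (↑) ⁻¹' s) = volume s := by
  rw [← (UnitAddCircle.measurePreserving_mk 0).measure_preimage hs.nullMeasurableSet, zero_add,
    restrict_Ioc_eq_restrict_Icc, Measure.restrict_apply (AddCircle.measurable_mk' hs),
    Set.inter_comm]

theorem volume_Aset_inter_le (ψ : ℕ → ℝ) (γ γ' : ℝ) (q : ℕ) {q' : ℕ} (hq' : 0 < q') :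
    volume (Aset ψ γ q ∩ Aset ψ γ' q') ≤
      ENNReal.ofReal (2 * ψ q + q.gcd q' / q') * ENNReal.ofReal (2 * ψ q') := by
  have hmeas (q : ℕ) (γ : ℝ) :
      MeasurableSet ((q • ·) ⁻¹' ball (γ : UnitAddCircle) (ψ q)) :=
    measurableSet_ball.preimage (by fun_prop)
  rw [Aset_eq_Icc_inter_preimage, Aset_eq_Icc_inter_preimage, ← Set.inter_inter_distrib_left,
    ← Set.preimage_inter, volume_Icc_inter_coe_preimage ((hmeas q γ).inter (hmeas q' γ'))]
  simpa only [div_one] using volume_nsmul_preimage_ball_inter_le q hq' (γ : UnitAddCircle) γ' _ _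

theorem volume_Aset_inter_le_of_le_two_mul {H : ℝ} (hH : 0 < H) {ψ : ℕ → ℝ} (γ γ' : ℝ) {q q' : ℕ}
    (hq' : 0 < q') (h : H * q.gcd q' ≤ 2 * (q' * ψ q)) :
    volume (Aset ψ γ q ∩ Aset ψ γ' q') ≤ ENNReal.ofReal (4 * ψ q * ψ q' * (1 + 1 / H)) := by
  have hq'_pos : (0 : ℝ) < q' := by exact_mod_cast hq'
  have hψ : 0 ≤ ψ q := by
    have : 0 ≤ H * q.gcd q' := by positivity
    exact nonneg_of_mul_nonneg_right (by linarith) hq'_pos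
  have hgcd : (q.gcd q' : ℝ) / q' ≤ 2 * ψ q / H := by
    rw [div_le_div_iff₀ hq'_pos hH]
    linarith
  calc volume (Aset ψ γ q ∩ Aset ψ γ' q')
      ≤ ENNReal.ofReal (2 * ψ q + q.gcd q' / q') * ENNReal.ofReal (2 * ψ q') :=
        volume_Aset_inter_le ψ γ γ' q hq'
    _ ≤ ENNReal.ofReal (2 * ψ q + 2 * ψ q / H) * ENNReal.ofReal (2 * ψ q') := by gcongr
    _ = ENNReal.ofReal (4 * ψ q * ψ q' * (1 + 1 / H)) := by
        rw [← ENNReal.ofReal_mul (by positivity)]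
        congr 1
        ring

theorem stmt8_general {H : ℝ} (hH : 0 < H) (ψ : ℕ → ℝ) (γ γ' : ℝ) {q q' : ℕ} (hq : 0 < q)
    (hq' : 0 < q') (hΔ : H * q.gcd q' ≤ Δfun ψ q q') :
    volume (Aset ψ γ q ∩ Aset ψ γ' q') ≤ ENNReal.ofReal (4 * ψ q * ψ q' * (1 + 1 / H)) := by
  unfold Δfun at hΔ
  rcases le_total (q * ψ q') (q' * ψ q) with hle | hle
  · exact volume_Aset_inter_le_of_le_two_mul hH γ γ' hq' (by linarith)
  · rw [Set.inter_comm, mul_right_comm 4]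
    exact volume_Aset_inter_le_of_le_two_mul hH γ' γ hq (by rw [Nat.gcd_comm]; linarith)

theorem stmt8 : ∃ C₀ > (1:ℝ), ∀ H : ℕ, 2 < H →
    ∀ ψ : ℕ → ℝ, (∀ q, 1 ≤ q → 0 < ψ q) → (∀ q, 1 ≤ q → ψ q < 1/2) →
    ∀ γ : ℝ, Irrational γ →
    ∀ q q' : ℕ, 1 ≤ q' → q' < q →
    H * Nat.gcd q q' ≤ Δfun ψ q q' →
    volume (Aset ψ γ q ∩ Aset ψ γ q') ≤
      ENNReal.ofReal (4 * ψ q * ψ q' * (1 + C₀ / (2 * H))) := by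
  refine ⟨2, one_lt_two, fun H hH ψ _ _ γ _ q q' hq' hlt hΔ ↦ ?_⟩
  rw [← div_div, div_self two_ne_zero]
  exact stmt8_general (by exact_mod_cast pos_of_gt hH) ψ γ γ (by omega) hq' hΔ
end
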